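/- Let K ∈ ℝ and N ∈ (1,∞). The mapping (0, D_{K,N}] ∋ D' ↦ (D')²·λ[h_{K,N,D'}] is non-increasing if K ≤ 0 and non-decreasing if K ≥ 0; in particular it is constant if K = 0. -/

import Mathlib

open MeasureTheory Filter

/-- The function `s_κ` from the paper. -/
noncomputable def sKappa (κ θ : ℝ) : ℝ :=
  if 0 < κ then Real.sin (Real.sqrt κ * θ) / Real.sqrt κ
  else if κ < 0 then Real.sinh (Real.sqrt (-κ) * θ) / Real.sqrt (-κ)
  else θ

/-- The support of the measure `h · 𝓛¹`. -/
noncomputable def measSupport (h : ℝ → ℝ) : Set ℝ :=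
  {x : ℝ | ∀ ε > 0,
    0 < (MeasureTheory.volume.withDensity (fun y => ENNReal.ofReal (h y))) (Metric.ball x ε)}

/-- A one-dimensional `MCP(K,N)` density. -/
def IsMCPDensity (K N : ℝ) (h : ℝ → ℝ) : Prop :=
  (∀ x, 0 ≤ h x) ∧ MeasureTheory.LocallyIntegrable h MeasureTheory.volume ∧
  ∀ x₀ ∈ measSupport h, ∀ x₁ ∈ measSupport h,
    (0 < K → x₀ ≠ x₁ → |x₁ - x₀| < Real.pi / Real.sqrt (K / (N - 1))) ∧
    ∀ t ∈ Set.Icc (0:ℝ) 1,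
      (sKappa (K / (N - 1)) ((1 - t) * |x₁ - x₀|) / sKappa (K / (N - 1)) |x₁ - x₀|) ^ (N - 1)
          * h x₀
        ≤ h (t * x₁ + (1 - t) * x₀)

/-- The model density `h_{K,N,D}`. -/
noncomputable def modelDensity (K N D : ℝ) (x : ℝ) : ℝ :=
  if x ∈ Set.Icc 0 (D / 2) then sKappa (K / (N - 1)) (D - x) ^ (N - 1)
  else if x ∈ Set.Icc (D / 2) D then sKappa (K / (N - 1)) x ^ (N - 1)
  else 0

/-- Locally Lipschitz functions on a subset `I` of the reals. -/
def LocLipschitzOn (f : ℝ → ℝ) (I : Set ℝ) : Prop :=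
  ∀ x ∈ I, ∃ ε > 0, ∃ C : NNReal, LipschitzOnWith C f (I ∩ Metric.ball x ε)

/-- The local Lipschitz slope `|∇f|(x)` relative to `I`. -/
noncomputable def slopeOn (f : ℝ → ℝ) (I : Set ℝ) (x : ℝ) : ℝ :=
  Filter.limsup (fun y => |f y - f x| / |y - x|) (nhdsWithin x (I \ {x}))

/-- The Poincaré constant `λ[h, I]` of the density `h` on `I`. -/
noncomputable def poincareConst (h : ℝ → ℝ) (I : Set ℝ) : ℝ :=
  sInf { r : ℝ | ∃ f : ℝ → ℝ, LocLipschitzOn f I ∧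
    (∫ x in I, f x * h x) = 0 ∧
    (0 < ∫ x in I, (f x) ^ 2 * h x) ∧
    MeasureTheory.IntegrableOn (fun x => (f x) ^ 2 * h x) I ∧
    r = (∫ x in I, (slopeOn f I x) ^ 2 * h x) / (∫ x in I, (f x) ^ 2 * h x) }

open scoped Topology

theorem locLipschitzOn_univ_iff {f : ℝ → ℝ} : LocLipschitzOn f Set.univ ↔ LocallyLipschitz f := by
  simp only [LocLipschitzOn, LocallyLipschitz, Set.mem_univ, true_imp_iff, Set.univ_inter]
  refine forall_congr' fun x => ⟨?_, ?_⟩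
  · rintro ⟨ε, hε, C, hC⟩
    exact ⟨C, _, Metric.ball_mem_nhds x hε, hC⟩
  · rintro ⟨C, t, ht, hC⟩
    obtain ⟨ε, hε, h⟩ := Metric.mem_nhds_iff.1 ht
    exact ⟨ε, hε, C, hC.mono h⟩

theorem slopeOn_univ_eq_abs_deriv {f : ℝ → ℝ} {x : ℝ} (hf : DifferentiableAt ℝ f x) :
    slopeOn f Set.univ x = |deriv f x| := by
  have h := (hasDerivAt_iff_tendsto_slope.1 hf.hasDerivAt).abs
  rw [slopeOn, ← Set.compl_eq_univ_sdiff]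
  refine Filter.Tendsto.limsup_eq (h.congr fun y => ?_)
  rw [slope_def_field, abs_div]

theorem LocallyLipschitz.ae_differentiableAt_real {f : ℝ → ℝ} (hf : LocallyLipschitz f) :
    ∀ᵐ x, DifferentiableAt ℝ f x := by
  choose C t ht hC using hf
  choose ε hε hεt using fun x => Metric.mem_nhds_iff.1 (ht x)
  obtain ⟨s, hs, hcov⟩ := TopologicalSpace.countable_cover_nhds
    (fun x => Metric.ball_mem_nhds x (hε x))
  have h : ∀ᵐ x, ∀ y ∈ s, x ∈ Metric.ball y (ε y) →
      DifferentiableWithinAt ℝ f (Metric.ball y (ε y)) x :=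
    (ae_ball_iff hs).2 fun y _ => ((hC y).mono (hεt y)).ae_differentiableWithinAt_of_mem_real
  filter_upwards [h] with x hx
  have hxm : x ∈ ⋃ y ∈ s, Metric.ball y (ε y) := hcov ▸ Set.mem_univ x
  simp only [Set.mem_iUnion] at hxm
  obtain ⟨y, hy, hxy⟩ := hxm
  exact (hx y hy hxy).differentiableAt (Metric.isOpen_ball.mem_nhds hxy)

/-- The Rayleigh quotients of locally Lipschitz functions with vanishing `h`-mean. -/
def rayleighQuotients (h : ℝ → ℝ) : Set ℝ :=
  {r : ℝ | ∃ f : ℝ → ℝ, LocallyLipschitz f ∧ ∫ x, f x * h x = 0 ∧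
    0 < ∫ x, f x ^ 2 * h x ∧ Integrable (fun x => f x ^ 2 * h x) ∧
    r = (∫ x, deriv f x ^ 2 * h x) / ∫ x, f x ^ 2 * h x}

theorem poincareConst_univ (h : ℝ → ℝ) :
    poincareConst h Set.univ = sInf (rayleighQuotients h) := by
  rw [poincareConst, rayleighQuotients]
  congr 1
  ext r
  simp only [Set.mem_ofPred_eq, locLipschitzOn_univ_iff, Measure.restrict_univ, integrableOn_univ]
  refine exists_congr fun f => and_congr_right fun hf => ?_
  have key : ∫ x, slopeOn f Set.univ x ^ 2 * h x = ∫ x, deriv f x ^ 2 * h x := by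
    refine integral_congr_ae ?_
    filter_upwards [hf.ae_differentiableAt_real] with x hx
    rw [slopeOn_univ_eq_abs_deriv hx, sq_abs]
  rw [key]

theorem integral_comp_affine (g : ℝ → ℝ) {c : ℝ} (hc : 0 < c) (b : ℝ) :
    ∫ x, g (c * x + b) = c⁻¹ * ∫ x, g x := by
  rw [Measure.integral_comp_mul_left (fun x => g (x + b)) c, integral_add_right_eq_self,
    abs_of_pos (inv_pos.2 hc), smul_eq_mul]

theorem integrable_comp_affine {g : ℝ → ℝ} (hg : Integrable g) {c : ℝ} (hc : c ≠ 0) (b : ℝ) :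
    Integrable fun x => g (c * x + b) :=
  (hg.comp_add_right b).comp_mul_left' hc

theorem rayleighQuotients_comp_affine {h : ℝ → ℝ} {c : ℝ} (hc : 0 < c) (b : ℝ) {r : ℝ}
    (hr : r ∈ rayleighQuotients h) :
    c ^ 2 * r ∈ rayleighQuotients fun x => h (c * x + b) := by
  obtain ⟨f, hf, hmean, hpos, hint, rfl⟩ := hr
  have hlip : LocallyLipschitz fun x : ℝ => c * x + b := by
    have : ContDiff ℝ 1 fun x : ℝ => c * x + b := by fun_prop
    exact this.locallyLipschitz
  have hderiv (x : ℝ) : deriv (fun x => f (c * x + b)) x = c * deriv f (c * x + b) := by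
    have h1 := deriv_comp_mul_left c (fun x => f (x + b)) x
    rw [deriv_comp_add_const] at h1
    simpa using h1
  refine ⟨fun x => f (c * x + b), hf.comp hlip, ?_, ?_, ?_, ?_⟩
  · rw [integral_comp_affine (fun x => f x * h x) hc, hmean, mul_zero]
  · rw [integral_comp_affine (fun x => f x ^ 2 * h x) hc]
    positivity
  · exact integrable_comp_affine hint hc.ne' b
  · simp only [hderiv, mul_pow, mul_assoc]
    rw [integral_const_mul, integral_comp_affine (fun x => f x ^ 2 * h x) hc,
      integral_comp_affine (fun x => deriv f x ^ 2 * h x) hc]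
    field_simp

theorem sInf_rayleighQuotients_comp_affine (h : ℝ → ℝ) {c : ℝ} (hc : 0 < c) (b : ℝ) :
    sInf (rayleighQuotients fun x => h (c * x + b)) = c ^ 2 * sInf (rayleighQuotients h) := by
  have : rayleighQuotients (fun x => h (c * x + b)) =
      (fun r => c ^ 2 • r) '' rayleighQuotients h := by
    refine Set.Subset.antisymm (fun r hr => ?_) ?_
    · have h1 := rayleighQuotients_comp_affine (inv_pos.2 hc) (-(c⁻¹ * b)) hr
      have h2 : (fun x => h (c * (c⁻¹ * x + -(c⁻¹ * b)) + b)) = h := by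
        ext x
        congr 1
        field_simp
        ring
      rw [h2] at h1
      refine ⟨_, h1, ?_⟩
      simp only [smul_eq_mul]
      field_simp
    · rintro _ ⟨r, hr, rfl⟩
      exact rayleighQuotients_comp_affine hc b hr
  rw [this, Set.image_smul, Real.sInf_smul_of_nonneg (by positivity), smul_eq_mul]

theorem measure_le_of_forall_Ioo_le {μ ν : Measure ℝ} [NullSingletonClass μ]
    (h : ∀ a, 0 ≤ a → μ (Set.Ioo 0 a) ≤ ν (Set.Ioo 0 a))
    {S : Set ℝ} (hS0 : S ⊆ Set.Ioi 0) (hSb : BddAbove S)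
    (hSl : ∀ x ∈ S, ∀ y, 0 < y → y ≤ x → y ∈ S) : μ S ≤ ν S := by
  rcases S.eq_empty_or_nonempty with rfl | ⟨z, hz⟩
  · simp
  have hle : ∀ x ∈ S, x ≤ sSup S := fun x hx => le_csSup hSb hx
  have h1 : S ⊆ Set.Ioc 0 (sSup S) := fun x hx => ⟨hS0 hx, hle x hx⟩
  have h2 : Set.Ioo 0 (sSup S) ⊆ S := by
    rintro y ⟨hy0, hy⟩
    obtain ⟨x, hx, hyx⟩ := exists_lt_of_lt_csSup ⟨z, hz⟩ hy
    exact hSl x hx y hy0 hyx.le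
  calc μ S ≤ μ (Set.Ioc 0 (sSup S)) := measure_mono h1
    _ = μ (Set.Ioo 0 (sSup S)) := measure_congr Ioo_ae_eq_Ioc.symm
    _ ≤ ν (Set.Ioo 0 (sSup S)) := h _ ((hS0 hz).le.trans (hle z hz))
    _ ≤ ν S := measure_mono h2

theorem integral_mul_le_of_antitoneOn {p q φ : ℝ → ℝ} {R : ℝ} (hp : ∀ x, 0 ≤ p x)
    (hq : ∀ x, 0 ≤ q x) (hpi : Integrable p) (hqi : Integrable q)
    (hφ : AntitoneOn φ (Set.Ioi 0)) (hφ0 : ∀ x, 0 ≤ φ x) (hφR : ∀ x, R < x → φ x = 0)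
    (hφp : Integrable fun x => φ x * p x) (hφq : Integrable fun x => φ x * q x)
    (h : ∀ a, 0 ≤ a → ∫ x in Set.Ioo 0 a, p x ≤ ∫ x in Set.Ioo 0 a, q x) :
    ∫ x in Set.Ioi 0, φ x * p x ≤ ∫ x in Set.Ioi 0, φ x * q x := by
  have hmeas : AEMeasurable φ (volume.restrict (Set.Ioi 0)) :=
    aemeasurable_restrict_of_antitoneOn measurableSet_Ioi hφ
  set μ : (ℝ → ℝ) → Measure ℝ := fun f =>
    (volume.restrict (Set.Ioi 0)).withDensity fun x => ENNReal.ofReal (f x) with hμ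
  have hac (f : ℝ → ℝ) : μ f ≪ volume.restrict (Set.Ioi 0) := withDensity_absolutelyContinuous _ _
  have hlc {f : ℝ → ℝ} (hf0 : ∀ x, 0 ≤ f x) (hfi : Integrable f)
      (hφf : Integrable fun x => φ x * f x) :
      ENNReal.ofReal (∫ x in Set.Ioi 0, φ x * f x) =
        ∫⁻ s in Set.Ioi 0, μ f {x | s < φ x} := by
    rw [← lintegral_eq_lintegral_meas_lt (μ f) (ae_of_all _ hφ0) (hmeas.mono_ac (hac f)),
      lintegral_withDensity_eq_lintegral_mul₀ hfi.1.aemeasurable.ennreal_ofReal.restrict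
        hmeas.ennreal_ofReal,
      ofReal_integral_eq_lintegral_ofReal hφf.restrict
        (ae_of_all _ fun x => mul_nonneg (hφ0 x) (hf0 x))]
    refine lintegral_congr fun x => ?_
    rw [Pi.mul_apply, ← ENNReal.ofReal_mul (hf0 x), mul_comm]
  have hIoo {f : ℝ → ℝ} (hf0 : ∀ x, 0 ≤ f x) (hfi : Integrable f) (a : ℝ) :
      μ f (Set.Ioo 0 a) = ENNReal.ofReal (∫ x in Set.Ioo 0 a, f x) := by
    rw [hμ, withDensity_apply _ measurableSet_Ioo, Measure.restrict_restrict measurableSet_Ioo,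
      Set.inter_eq_left.2 Set.Ioo_subset_Ioi_self,
      ofReal_integral_eq_lintegral_ofReal hfi.restrict (ae_of_all _ hf0)]
  have hpos (f : ℝ → ℝ) (s : Set ℝ) : μ f s = μ f (s ∩ Set.Ioi 0) := by
    refine (measure_inter_conull ?_).symm
    exact hac f (by rw [Measure.restrict_apply measurableSet_Ioi.compl, Set.compl_inter_self, measure_empty])
  have : NullSingletonClass (μ p) := ⟨fun x => hac p (measure_singleton x)⟩
  refine (ENNReal.ofReal_le_ofReal_iff
    (integral_nonneg fun x => mul_nonneg (hφ0 x) (hq x))).1 ?_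
  rw [hlc hp hpi hφp, hlc hq hqi hφq]
  refine setLIntegral_mono' measurableSet_Ioi fun s hs => ?_
  rw [hpos p, hpos q]
  refine measure_le_of_forall_Ioo_le (fun a ha => ?_) Set.inter_subset_right ⟨R, ?_⟩ ?_
  · rw [hIoo hp hpi, hIoo hq hqi]
    exact ENNReal.ofReal_le_ofReal (h a ha)
  · rintro x ⟨hx, -⟩
    by_contra! hxR
    rw [Set.mem_ofPred_eq, hφR x hxR] at hx
    exact lt_asymm hx hs
  · rintro x ⟨hx, hx0⟩ y hy hyx
    exact ⟨lt_of_lt_of_le hx (hφ hy hx0 hyx), hy⟩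

/-- Bounded, even, nonnegative densities supported in `[-1/2, 1/2]`. -/
structure IsEvenProfile (g : ℝ → ℝ) : Prop where
  measurable : Measurable g
  nonneg : ∀ x, 0 ≤ g x
  bounded : ∃ M, ∀ x, g x ≤ M
  even : ∀ x, g (-x) = g x
  eq_zero : ∀ x, x ∉ Set.Icc (-(1 / 2) : ℝ) (1 / 2) → g x = 0

namespace IsEvenProfile

variable {g : ℝ → ℝ}

theorem integrable_mul (hg : IsEvenProfile g) {q : ℝ → ℝ} (hq : Measurable q)
    (hb : ∃ C, ∀ x ∈ Set.Icc (-(1 / 2) : ℝ) (1 / 2), |q x| ≤ C) :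
    Integrable fun x => q x * g x := by
  obtain ⟨M, hM⟩ := hg.bounded
  obtain ⟨C, hC⟩ := hb
  have h : IntegrableOn (fun x => q x * g x) (Set.Icc (-(1 / 2) : ℝ) (1 / 2)) := by
    refine Measure.integrableOn_of_bounded (M := C * M) (by simp)
      (hq.mul hg.measurable).aestronglyMeasurable ?_
    filter_upwards [ae_restrict_mem measurableSet_Icc] with x hx
    rw [Real.norm_eq_abs, abs_mul, abs_of_nonneg (hg.nonneg x)]
    exact mul_le_mul (hC x hx) (hM x) (hg.nonneg x) ((abs_nonneg _).trans (hC x hx))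
  refine (integrableOn_iff_integrable_of_support_subset fun x hx => ?_).1 h
  by_contra hx'
  exact hx (by simp [hg.eq_zero x hx'])

theorem integrable_continuous_mul (hg : IsEvenProfile g) {q : ℝ → ℝ} (hq : Continuous q) :
    Integrable fun x => q x * g x :=
  hg.integrable_mul hq.measurable (isCompact_Icc.exists_bound_of_continuousOn hq.continuousOn)

theorem integrable_deriv_sq_mul (hg : IsEvenProfile g) {f : ℝ → ℝ} (hf : LocallyLipschitz f) :
    Integrable fun x => deriv f x ^ 2 * g x := by
  refine hg.integrable_mul ((measurable_deriv f).pow_const 2) ?_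
  obtain ⟨C, hC⟩ := (hf.locallyLipschitzOn
    (s := Set.Icc (-1 : ℝ) 1)).exists_lipschitzOnWith_of_compact isCompact_Icc
  refine ⟨(C : ℝ) ^ 2, fun x hx => ?_⟩
  have h := norm_deriv_le_of_lipschitzOn
    (Icc_mem_nhds (by linarith [hx.1] : (-1 : ℝ) < x) (by linarith [hx.2])) hC
  rw [abs_of_nonneg (sq_nonneg _), ← sq_abs]
  exact pow_le_pow_left₀ (abs_nonneg _) h 2

end IsEvenProfile

theorem integral_eq_two_mul_integral_Ioi_of_even {F : ℝ → ℝ} (hF : ∀ x, F (-x) = F x) :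
    ∫ x, F x = 2 * ∫ x in Set.Ioi 0, F x := by
  rw [← integral_comp_abs]
  refine integral_congr_ae (ae_of_all _ fun x => ?_)
  rcases abs_choice x with h | h <;> simp [h, hF]

theorem integral_eq_zero_of_odd {F : ℝ → ℝ} (hF : ∀ x, F (-x) = -F x) : ∫ x, F x = 0 := by
  have h := integral_neg_eq_self F volume
  simp only [hF, integral_neg] at h
  linarith

theorem sInf_rayleighQuotients_nonneg {g : ℝ → ℝ} (hg : ∀ x, 0 ≤ g x) :
    0 ≤ sInf (rayleighQuotients g) := by
  refine Real.sInf_nonneg ?_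
  rintro _ ⟨f, -, -, hpos, -, rfl⟩
  exact div_nonneg (integral_nonneg fun x => mul_nonneg (sq_nonneg _) (hg x)) hpos.le

theorem sInf_rayleighQuotients_mul_le {g : ℝ → ℝ} (hg : IsEvenProfile g) {v : ℝ → ℝ}
    (hv : LocallyLipschitz v) (hmean : ∫ x, v x * g x = 0) :
    sInf (rayleighQuotients g) * ∫ x, v x ^ 2 * g x ≤ ∫ x, deriv v x ^ 2 * g x := by
  have h0 : 0 ≤ ∫ x, v x ^ 2 * g x :=
    integral_nonneg fun x => mul_nonneg (sq_nonneg _) (hg.nonneg x)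
  rcases h0.eq_or_lt with h | h
  · rw [← h, mul_zero]
    exact integral_nonneg fun x => mul_nonneg (sq_nonneg _) (hg.nonneg x)
  · rw [← le_div_iff₀ h]
    refine csInf_le ⟨0, ?_⟩
      ⟨v, hv, hmean, h, hg.integrable_continuous_mul (hv.continuous.pow 2), rfl⟩
    rintro _ ⟨f, -, -, hpos, -, rfl⟩
    exact div_nonneg (integral_nonneg fun x => mul_nonneg (sq_nonneg _) (hg.nonneg x)) hpos.le

theorem sInf_rayleighQuotients_mul_integral_Ioo_le {g : ℝ → ℝ} (hg : IsEvenProfile g) {u : ℝ → ℝ}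
    (hu : LocallyLipschitz u) (hu0 : u 0 = 0) {a : ℝ} (ha : 0 ≤ a) :
    sInf (rayleighQuotients g) * ∫ x in Set.Ioo 0 a, u x ^ 2 * g x ≤
      ∫ x in Set.Ioo 0 a, deriv u x ^ 2 * g x := by
  set v : ℝ → ℝ := fun x => u (max 0 (min x a)) - u (max 0 (min (-x) a)) with hv
  have hneg : LocallyLipschitz fun x : ℝ => -x := LipschitzWith.id.neg.locallyLipschitz
  have hvL : LocallyLipschitz v :=
    (hu.comp ((LocallyLipschitz.id.min_const a).const_max 0)).sub
      (hu.comp ((hneg.min_const a).const_max 0))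
  have hodd (x : ℝ) : v (-x) = -v x := by simp [hv]
  have hderiv (x : ℝ) : deriv v (-x) = deriv v x := by
    have h := deriv_comp_neg v x
    rw [funext hodd, deriv.fun_neg] at h
    linarith
  have hv_pos {x : ℝ} (hx : 0 < x) : v x = u (min x a) := by
    simp only [hv]
    rw [max_eq_right (le_min hx.le ha), max_eq_left ((min_le_left _ _).trans (by linarith)), hu0,
      sub_zero]
  have h := sInf_rayleighQuotients_mul_le hg hvL
    (integral_eq_zero_of_odd fun x => by rw [hodd, hg.even, neg_mul])
  rw [integral_eq_two_mul_integral_Ioi_of_even fun x => by rw [hodd, hg.even, neg_sq],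
    integral_eq_two_mul_integral_Ioi_of_even fun x => by rw [hderiv, hg.even]] at h
  have h1 : ∫ x in Set.Ioo 0 a, u x ^ 2 * g x ≤ ∫ x in Set.Ioi 0, v x ^ 2 * g x := by
    calc ∫ x in Set.Ioo 0 a, u x ^ 2 * g x = ∫ x in Set.Ioo 0 a, v x ^ 2 * g x := by
          refine setIntegral_congr_fun measurableSet_Ioo fun x hx => ?_
          simp only [hv_pos hx.1, min_eq_left hx.2.le]
      _ ≤ _ := setIntegral_mono_set
          (hg.integrable_continuous_mul (hvL.continuous.fun_pow 2)).integrableOn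
          (ae_of_all _ fun x => mul_nonneg (sq_nonneg _) (hg.nonneg x))
          Set.Ioo_subset_Ioi_self.eventuallyLE
  have h2 : ∫ x in Set.Ioi 0, deriv v x ^ 2 * g x = ∫ x in Set.Ioo 0 a, deriv u x ^ 2 * g x := by
    rw [← integral_indicator measurableSet_Ioi, ← integral_indicator measurableSet_Ioo]
    refine integral_congr_ae ?_
    filter_upwards [compl_mem_ae_iff.2 (measure_singleton a)] with x hxa
    have hxa : x ≠ a := hxa
    rcases le_or_gt x 0 with hx | hx
    · simp [Set.indicator, hx.not_gt]
    rcases hxa.lt_or_gt with hxa | hxa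
    · have : v =ᶠ[𝓝 x] u := by
        filter_upwards [Ioo_mem_nhds hx hxa] with y hy
        rw [hv_pos hy.1, min_eq_left hy.2.le]
      simp [Set.indicator, hx, hxa, this.deriv_eq]
    · have : v =ᶠ[𝓝 x] fun _ => u a := by
        filter_upwards [Ioi_mem_nhds hxa] with y hy
        rw [hv_pos (ha.trans_lt hy), min_eq_right (le_of_lt hy)]
      simp [Set.indicator, hxa.not_gt, this.deriv_eq]
  rw [h2] at h
  have h3 := mul_le_mul_of_nonneg_left h1 (sInf_rayleighQuotients_nonneg hg.nonneg)
  linarith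

theorem sInf_rayleighQuotients_mul_integral_Ioi_le {G H φ : ℝ → ℝ} (hG : IsEvenProfile G)
    (hH : IsEvenProfile H) (hHG : ∀ x, H x = φ x * G x) (hφ : AntitoneOn φ (Set.Ioi 0))
    (hφ0 : ∀ x, 0 ≤ φ x) (hφR : ∀ x, 1 / 2 < x → φ x = 0) {u : ℝ → ℝ} (hu : LocallyLipschitz u)
    (hu0 : u 0 = 0) :
    sInf (rayleighQuotients G) * ∫ x in Set.Ioi 0, u x ^ 2 * H x ≤
      ∫ x in Set.Ioi 0, deriv u x ^ 2 * H x := by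
  set l := sInf (rayleighQuotients G)
  have hl : 0 ≤ l := sInf_rayleighQuotients_nonneg hG.nonneg
  have e1 (x : ℝ) : l * (u x ^ 2 * H x) = φ x * (l * (u x ^ 2 * G x)) := by rw [hHG]; ring
  have e2 (x : ℝ) : deriv u x ^ 2 * H x = φ x * (deriv u x ^ 2 * G x) := by rw [hHG]; ring
  rw [← integral_const_mul]
  have i1 := (hH.integrable_continuous_mul (hu.continuous.fun_pow 2)).const_mul l
  have i2 := hH.integrable_deriv_sq_mul hu
  simp only [e1, e2] at i1 i2 ⊢
  refine integral_mul_le_of_antitoneOn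
    (fun x => mul_nonneg hl (mul_nonneg (sq_nonneg _) (hG.nonneg x)))
    (fun x => mul_nonneg (sq_nonneg _) (hG.nonneg x))
    ((hG.integrable_continuous_mul (hu.continuous.fun_pow 2)).const_mul l)
    (hG.integrable_deriv_sq_mul hu) hφ hφ0 hφR i1 i2 fun a ha => ?_
  rw [integral_const_mul]
  exact sInf_rayleighQuotients_mul_integral_Ioo_le hG hu hu0 ha

theorem sInf_rayleighQuotients_mul_integral_le {G H φ : ℝ → ℝ} (hG : IsEvenProfile G)
    (hH : IsEvenProfile H) (hHG : ∀ x, H x = φ x * G x) (hφ : AntitoneOn φ (Set.Ioi 0))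
    (hφ0 : ∀ x, 0 ≤ φ x) (hφR : ∀ x, 1 / 2 < x → φ x = 0) {u : ℝ → ℝ} (hu : LocallyLipschitz u)
    (hu0 : u 0 = 0) :
    sInf (rayleighQuotients G) * ∫ x, u x ^ 2 * H x ≤ ∫ x, deriv u x ^ 2 * H x := by
  have hsplit {F : ℝ → ℝ} (hF : Integrable F) :
      ∫ x, F x = (∫ x in Set.Ioi 0, F (-x)) + ∫ x in Set.Ioi 0, F x := by
    rw [integral_comp_neg_Ioi, neg_zero, intervalIntegral.integral_Iic_add_Ioi hF.integrableOn
      hF.integrableOn]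
  have hneg : LocallyLipschitz fun x : ℝ => -x := LipschitzWith.id.neg.locallyLipschitz
  have h1 := sInf_rayleighQuotients_mul_integral_Ioi_le hG hH hHG hφ hφ0 hφR hu hu0
  have h2 := sInf_rayleighQuotients_mul_integral_Ioi_le hG hH hHG hφ hφ0 hφR
    (hu.comp hneg) (by simpa using hu0)
  have h3 (x : ℝ) : deriv (u ∘ fun x => -x) x = -deriv u (-x) := deriv_comp_neg u x
  rw [hsplit (hH.integrable_continuous_mul (hu.continuous.fun_pow 2)),
    hsplit (hH.integrable_deriv_sq_mul hu)]
  simp only [h3, neg_sq, Function.comp_apply] at h2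
  simp only [hH.even]
  linarith

theorem sInf_rayleighQuotients_le_of_antitoneOn {G H φ : ℝ → ℝ} (hG : IsEvenProfile G)
    (hH : IsEvenProfile H) (hHpos : ∀ x ∈ Set.Ioo (-(1 / 2) : ℝ) (1 / 2), 0 < H x)
    (hHG : ∀ x, H x = φ x * G x) (hφ : AntitoneOn φ (Set.Ioi 0))
    (hφ0 : ∀ x, 0 ≤ φ x) (hφR : ∀ x, 1 / 2 < x → φ x = 0) :
    sInf (rayleighQuotients G) ≤ sInf (rayleighQuotients H) := by
  refine le_csInf ?_ ?_
  · have hint : Integrable fun x => x ^ 2 * H x := hH.integrable_continuous_mul (by fun_prop)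
    refine ⟨_, fun x => x, LocallyLipschitz.id, ?_, ?_, hint, rfl⟩
    · exact integral_eq_zero_of_odd fun x => by rw [hH.even, neg_mul]
    · rw [integral_pos_iff_support_of_nonneg (fun x => mul_nonneg (sq_nonneg _) (hH.nonneg x)) hint]
      refine lt_of_lt_of_le ?_ (measure_mono (s := Set.Ioo (0 : ℝ) (1 / 2)) fun x hx => ?_)
      · simp
      · have := hHpos x ⟨by linarith [hx.1], hx.2⟩
        have := hx.1
        exact (by positivity : x ^ 2 * H x ≠ 0)
  · rintro _ ⟨f, hf, hmean, hpos, hint, rfl⟩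
    rw [le_div_iff₀ hpos]
    have hu : LocallyLipschitz fun x => f x - f 0 := hf.sub (LocallyLipschitz.const _)
    have h := sInf_rayleighQuotients_mul_integral_le hG hH hHG hφ hφ0 hφR hu (sub_self _)
    simp only [deriv_sub_const] at h
    refine le_trans (mul_le_mul_of_nonneg_left ?_ (sInf_rayleighQuotients_nonneg hG.nonneg)) h
    have i0 := hH.integrable_continuous_mul (q := fun _ => f 0 ^ 2) continuous_const
    have i1 := (hH.integrable_continuous_mul hf.continuous).const_mul (2 * f 0)
    have e : ∀ x, (f x - f 0) ^ 2 * H x =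
        f x ^ 2 * H x - 2 * f 0 * (f x * H x) + f 0 ^ 2 * H x := fun x => by ring
    have i2 : Integrable fun x => f x ^ 2 * H x - 2 * f 0 * (f x * H x) := hint.sub i1
    simp only [e]
    rw [integral_add i2 i0, integral_sub hint i1, integral_const_mul, hmean]
    have : 0 ≤ ∫ x, f 0 ^ 2 * H x := integral_nonneg fun x => mul_nonneg (sq_nonneg _) (hH.nonneg x)
    linarith

/-- The derivative of `s_κ`. -/
noncomputable def cKappa (κ θ : ℝ) : ℝ :=
  if 0 < κ then Real.cos (√κ * θ) else if κ < 0 then Real.cosh (√(-κ) * θ) else 1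

theorem sKappa_of_neg {κ : ℝ} (h : κ < 0) :
    sKappa κ = fun x => Real.sinh (√(-κ) * x) / √(-κ) :=
  funext fun x => by simp [sKappa, h, h.not_gt]

theorem sKappa_of_pos {κ : ℝ} (h : 0 < κ) : sKappa κ = fun x => Real.sin (√κ * x) / √κ :=
  funext fun x => by simp [sKappa, h]

theorem sKappa_zero_left : sKappa 0 = id := funext fun x => by simp [sKappa]

theorem cKappa_of_neg {κ : ℝ} (h : κ < 0) : cKappa κ = fun x => Real.cosh (√(-κ) * x) :=
  funext fun x => by simp [cKappa, h, h.not_gt]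

theorem cKappa_of_pos {κ : ℝ} (h : 0 < κ) : cKappa κ = fun x => Real.cos (√κ * x) :=
  funext fun x => by simp [cKappa, h]

theorem cKappa_zero_left : cKappa 0 = fun _ => 1 := funext fun x => by simp [cKappa]

theorem hasDerivAt_sKappa (κ x : ℝ) : HasDerivAt (sKappa κ) (cKappa κ x) x := by
  rcases lt_trichotomy κ 0 with h | rfl | h
  · have hs : √(-κ) ≠ 0 := (Real.sqrt_pos.2 (by linarith)).ne'
    rw [sKappa_of_neg h, cKappa_of_neg h]
    simpa [hs] using (((hasDerivAt_id x).const_mul √(-κ)).sinh).div_const √(-κ)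
  · rw [sKappa_zero_left, cKappa_zero_left]
    exact hasDerivAt_id x
  · have hs : √κ ≠ 0 := (Real.sqrt_pos.2 h).ne'
    rw [sKappa_of_pos h, cKappa_of_pos h]
    simpa [hs] using (((hasDerivAt_id x).const_mul √κ).sin).div_const √κ

theorem hasDerivAt_cKappa (κ x : ℝ) : HasDerivAt (cKappa κ) (-κ * sKappa κ x) x := by
  rcases lt_trichotomy κ 0 with h | rfl | h
  · rw [sKappa_of_neg h, cKappa_of_neg h, mul_div_left_comm, Real.div_sqrt]
    simpa using ((hasDerivAt_id x).const_mul √(-κ)).cosh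
  · rw [cKappa_zero_left, neg_zero, zero_mul]
    exact hasDerivAt_const x 1
  · rw [sKappa_of_pos h, cKappa_of_pos h, neg_mul, mul_div_left_comm, Real.div_sqrt]
    simpa using ((hasDerivAt_id x).const_mul √κ).cos

theorem continuous_sKappa (κ : ℝ) : Continuous (sKappa κ) :=
  continuous_iff_continuousAt.2 fun x => (hasDerivAt_sKappa κ x).continuousAt

theorem sKappa_zero (κ : ℝ) : sKappa κ 0 = 0 := by simp [sKappa]

theorem sKappa_pos {κ x : ℝ} (hx : 0 < x) (hκ : 0 < κ → x < Real.pi / √κ) : 0 < sKappa κ x := by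
  rcases lt_trichotomy κ 0 with h | rfl | h
  · have hs : 0 < √(-κ) := Real.sqrt_pos.2 (by linarith)
    simp only [sKappa, h, h.not_gt, if_true, if_false]
    exact div_pos (Real.sinh_pos_iff.2 (by positivity)) hs
  · simpa [sKappa] using hx
  · have hs : 0 < √κ := Real.sqrt_pos.2 h
    simp only [sKappa, h, if_true]
    exact div_pos (Real.sin_pos_of_pos_of_lt_pi (by positivity)
      (by rw [mul_comm]; exact (lt_div_iff₀ hs).1 (hκ h))) hs

theorem sKappa_nonneg {κ x : ℝ} (hx : 0 ≤ x) (hκ : 0 < κ → x ≤ Real.pi / √κ) :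
    0 ≤ sKappa κ x := by
  rcases hx.eq_or_lt with rfl | hx
  · rw [sKappa_zero]
  by_cases h : 0 < κ ∧ x = Real.pi / √κ
  · have hs : √κ ≠ 0 := (Real.sqrt_pos.2 h.1).ne'
    rw [h.2, sKappa, if_pos h.1, mul_div_cancel₀ _ hs, Real.sin_pi, zero_div]
  · exact (sKappa_pos hx fun hk => (hκ hk).lt_of_ne fun he => h ⟨hk, he⟩).le

theorem antitoneOn_sKappa_div_sKappa {κ A B : ℝ} (hA : 0 < A) (hB : 0 < B)
    (hκ : κ * (B ^ 2 - A ^ 2) ≤ 0) (hAκ : 0 < κ → A ≤ Real.pi / √κ)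
    (hBκ : 0 < κ → B < Real.pi / √κ) :
    AntitoneOn (fun t => sKappa κ (A * t) / sKappa κ (B * t)) (Set.Ioc 0 1) := by
  have hs (D t : ℝ) : HasDerivAt (fun t => sKappa κ (D * t)) (cKappa κ (D * t) * D) t := by
    simpa using! (hasDerivAt_sKappa κ (D * t)).comp t ((hasDerivAt_id t).const_mul D)
  have hc (D t : ℝ) : HasDerivAt (fun t => cKappa κ (D * t)) (-κ * sKappa κ (D * t) * D) t := by
    simpa using! (hasDerivAt_cKappa κ (D * t)).comp t ((hasDerivAt_id t).const_mul D)
  have hApos {t : ℝ} (ht : 0 ≤ t) (ht1 : t ≤ 1) : 0 ≤ sKappa κ (A * t) :=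
    sKappa_nonneg (by positivity) fun h => (mul_le_of_le_one_right hA.le ht1).trans (hAκ h)
  have hBpos {t : ℝ} (ht : 0 < t) (ht1 : t ≤ 1) : 0 < sKappa κ (B * t) :=
    sKappa_pos (by positivity) fun h => (mul_le_of_le_one_right hB.le ht1).trans_lt (hBκ h)
  set w : ℝ → ℝ := fun t =>
    cKappa κ (A * t) * A * sKappa κ (B * t) - sKappa κ (A * t) * (cKappa κ (B * t) * B) with hw
  have hwd (t : ℝ) :
      HasDerivAt w (κ * (B ^ 2 - A ^ 2) * (sKappa κ (A * t) * sKappa κ (B * t))) t := by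
    convert! (((hc A t).mul_const A).mul (hs B t)).sub ((hs A t).mul ((hc B t).mul_const B)) using 1
    ring
  have hwa : AntitoneOn w (Set.Icc 0 1) := by
    refine antitoneOn_of_hasDerivWithinAt_nonpos (convex_Icc 0 1)
      (fun t _ => (hwd t).continuousAt.continuousWithinAt) (fun t _ => (hwd t).hasDerivWithinAt)
      fun t ht => ?_
    rw [interior_Icc] at ht
    exact mul_nonpos_of_nonpos_of_nonneg hκ
      (mul_nonneg (hApos ht.1.le ht.2.le) (hBpos ht.1 ht.2.le).le)
  have hd {t : ℝ} (ht : t ∈ Set.Ioc (0 : ℝ) 1) :=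
    (hs A t).div (hs B t) (hBpos ht.1 ht.2).ne'
  refine antitoneOn_of_hasDerivWithinAt_nonpos (convex_Ioc 0 1)
    (fun t ht => (hd ht).continuousAt.continuousWithinAt)
    (fun t ht => (hd (interior_subset ht)).hasDerivWithinAt) fun t ht => ?_
  have ht := interior_subset ht
  have h0 : w 0 = 0 := by simp [hw, sKappa_zero]
  exact div_nonpos_of_nonpos_of_nonneg
    ((hwa (by simp) ⟨ht.1.le, ht.2⟩ ht.1.le).trans_eq h0) (sq_nonneg _)

theorem modelDensity_affine {K N D : ℝ} (hD : 0 < D) (x : ℝ) :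
    modelDensity K N D (D * x + D / 2) =
      if |x| ≤ 1 / 2 then sKappa (K / (N - 1)) (D * (1 / 2 + |x|)) ^ (N - 1) else 0 := by
  have h1 : D * x + D / 2 ∈ Set.Icc 0 (D / 2) ↔ -(1 / 2) ≤ x ∧ x ≤ 0 := by
    constructor
    · rintro ⟨h, h'⟩
      constructor <;> by_contra! hx <;> nlinarith
    · rintro ⟨h, h'⟩
      constructor <;> nlinarith
  have h2 : D * x + D / 2 ∈ Set.Icc (D / 2) D ↔ 0 ≤ x ∧ x ≤ 1 / 2 := by
    constructor
    · rintro ⟨h, h'⟩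
      constructor <;> by_contra! hx <;> nlinarith
    · rintro ⟨h, h'⟩
      constructor <;> nlinarith
  rw [modelDensity]
  simp only [h1, h2, abs_le]
  rcases le_or_gt x 0 with hx | hx
  · have e : D - (D * x + D / 2) = D * (1 / 2 + |x|) := by rw [abs_of_nonpos hx]; ring
    by_cases h : -(1 / 2) ≤ x
    · rw [if_pos ⟨h, hx⟩, if_pos ⟨h, by linarith⟩, e]
    · rw [if_neg (by tauto), if_neg (fun h' => h (by linarith [h'.1])), if_neg (by tauto)]
  · have e : D * x + D / 2 = D * (1 / 2 + |x|) := by rw [abs_of_pos hx]; ring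
    rw [if_neg (fun h => hx.not_ge h.2), e]
    by_cases h : x ≤ 1 / 2
    · rw [if_pos ⟨hx.le, h⟩, if_pos ⟨by linarith, h⟩]
    · rw [if_neg (by tauto), if_neg (by tauto)]

theorem isEvenProfile_modelDensity {K N D : ℝ} (hN : 1 < N) (hD : 0 < D)
    (hDκ : 0 < K / (N - 1) → D ≤ Real.pi / √(K / (N - 1))) :
    IsEvenProfile fun x => modelDensity K N D (D * x + D / 2) := by
  simp only [modelDensity_affine hD]
  have hcont : Continuous fun x : ℝ => sKappa (K / (N - 1)) (D * (1 / 2 + |x|)) ^ (N - 1) :=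
    ((continuous_sKappa _).comp (by fun_prop)).rpow_const fun _ => Or.inr (by linarith)
  have hnn {x : ℝ} (hx : |x| ≤ 1 / 2) :
      0 ≤ sKappa (K / (N - 1)) (D * (1 / 2 + |x|)) ^ (N - 1) :=
    Real.rpow_nonneg (sKappa_nonneg (by positivity) fun h =>
      (mul_le_of_le_one_right hD.le (by linarith)).trans (hDκ h)) _
  refine ⟨?_, fun x => ?_, ?_, fun x => by simp only [abs_neg], fun x hx => ?_⟩
  · exact Measurable.ite (measurableSet_le measurable_id.abs measurable_const) hcont.measurable
      measurable_const
  · split_ifs with h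
    exacts [hnn h, le_rfl]
  · obtain ⟨C, hC⟩ := (isCompact_Icc (a := -(1 / 2 : ℝ)) (b := 1 / 2)).exists_bound_of_continuousOn
      hcont.continuousOn
    refine ⟨max C 0, fun x => ?_⟩
    split_ifs with h
    · exact ((le_abs_self _).trans (hC x (abs_le.1 h))).trans (le_max_left _ _)
    · exact le_max_right _ _
  · exact if_neg fun h => hx (abs_le.1 h)

theorem sq_mul_poincareConst_modelDensity_le {K N A B : ℝ} (hN : 1 < N) (hA : 0 < A) (hB : 0 < B)
    (hκ : K / (N - 1) * (B ^ 2 - A ^ 2) ≤ 0)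
    (hAκ : 0 < K / (N - 1) → A ≤ Real.pi / √(K / (N - 1)))
    (hBκ : 0 < K / (N - 1) → B < Real.pi / √(K / (N - 1))) :
    B ^ 2 * poincareConst (modelDensity K N B) Set.univ ≤
      A ^ 2 * poincareConst (modelDensity K N A) Set.univ := by
  set κ := K / (N - 1) with hκ_def
  rw [poincareConst_univ, poincareConst_univ, ← sInf_rayleighQuotients_comp_affine _ hA (A / 2),
    ← sInf_rayleighQuotients_comp_affine _ hB (B / 2)]
  have hp : 0 < N - 1 := by linarith
  have hAnn {t : ℝ} (ht : 0 < t) (ht1 : t ≤ 1) : 0 ≤ sKappa κ (A * t) :=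
    sKappa_nonneg (by positivity) fun h => (mul_le_of_le_one_right hA.le ht1).trans (hAκ h)
  have hBpos {t : ℝ} (ht : 0 < t) (ht1 : t ≤ 1) : 0 < sKappa κ (B * t) :=
    sKappa_pos (by positivity) fun h => (mul_le_of_le_one_right hB.le ht1).trans_lt (hBκ h)
  have hratio {t : ℝ} (ht : 0 < t) (ht1 : t ≤ 1) : 0 ≤ sKappa κ (A * t) / sKappa κ (B * t) :=
    div_nonneg (hAnn ht ht1) (hBpos ht ht1).le
  have hpos (x : ℝ) : 0 < 1 / 2 + |x| := by positivity
  refine sInf_rayleighQuotients_le_of_antitoneOn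
    (φ := fun x => if |x| ≤ 1 / 2 then
      (sKappa κ (A * (1 / 2 + |x|)) / sKappa κ (B * (1 / 2 + |x|))) ^ (N - 1) else 0)
    (isEvenProfile_modelDensity hN hB fun h => (hBκ h).le) (isEvenProfile_modelDensity hN hA hAκ)
    (fun x hx => ?_) (fun x => ?_) (fun x hx y hy hxy => ?_) (fun x => ?_) fun x hx => ?_
  · have hx : |x| < 1 / 2 := abs_lt.2 hx
    rw [modelDensity_affine hA, if_pos hx.le, ← hκ_def]
    exact Real.rpow_pos_of_pos (sKappa_pos (by positivity) fun h =>
      (mul_lt_of_lt_one_right hA (by linarith)).trans_le (hAκ h)) _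
  · rw [modelDensity_affine hA, modelDensity_affine hB, ← hκ_def]
    split_ifs with h
    · have h1 : 1 / 2 + |x| ≤ 1 := by linarith
      rw [Real.div_rpow (hAnn (hpos x) h1) (hBpos (hpos x) h1).le,
        div_mul_cancel₀ _ (Real.rpow_pos_of_pos (hBpos (hpos x) h1) _).ne']
    · simp
  · have hxy' : |x| ≤ |y| := abs_le_abs_of_nonneg (le_of_lt hx) hxy
    beta_reduce
    split_ifs with hy1 hx1 hx1
    · exact Real.rpow_le_rpow (hratio (hpos y) (by linarith))
        (antitoneOn_sKappa_div_sKappa hA hB hκ hAκ hBκ ⟨hpos x, by linarith⟩ ⟨hpos y, by linarith⟩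
          (by linarith)) hp.le
    · exact absurd (hxy'.trans hy1) hx1
    · exact Real.rpow_nonneg (hratio (hpos x) (by linarith)) _
    · exact le_rfl
  · split_ifs with h
    · exact Real.rpow_nonneg (hratio (hpos x) (by linarith)) _
    · exact le_rfl
  · exact if_neg (not_le.2 (hx.trans_le (le_abs_self x)))

/-- Monotonicity of `D' ↦ (D')² λ[h_{K,N,D'}]` (Lemma 4.11). -/
theorem stmt_10 (K N : ℝ) (hN : 1 < N) :
    (K ≤ 0 → AntitoneOn (fun D => D ^ 2 * poincareConst (modelDensity K N D) Set.univ)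
        {D : ℝ | 0 < D ∧ (0 < K → D ≤ Real.pi / Real.sqrt (K / (N - 1)))}) ∧
    (0 ≤ K → MonotoneOn (fun D => D ^ 2 * poincareConst (modelDensity K N D) Set.univ)
        {D : ℝ | 0 < D ∧ (0 < K → D ≤ Real.pi / Real.sqrt (K / (N - 1)))}) ∧
    (K = 0 → ∀ D₁ : ℝ, 0 < D₁ → ∀ D₂ : ℝ, 0 < D₂ →
        D₁ ^ 2 * poincareConst (modelDensity K N D₁) Set.univ
          = D₂ ^ 2 * poincareConst (modelDensity K N D₂) Set.univ) := by
  have hκ : 0 < K ↔ 0 < K / (N - 1) := by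
    rw [div_pos_iff_of_pos_right (by linarith : 0 < N - 1)]
  have hle {A B : ℝ} (hA : 0 < A) (hB : 0 < B) (hκAB : K * (B ^ 2 - A ^ 2) ≤ 0)
      (hAD : 0 < K → A ≤ Real.pi / √(K / (N - 1))) (hBD : 0 < K → B < Real.pi / √(K / (N - 1))) :
      B ^ 2 * poincareConst (modelDensity K N B) Set.univ ≤
        A ^ 2 * poincareConst (modelDensity K N A) Set.univ := by
    refine sq_mul_poincareConst_modelDensity_le hN hA hB ?_ (fun h => hAD (hκ.2 h))
      fun h => hBD (hκ.2 h)
    rw [div_mul_eq_mul_div]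
    exact div_nonpos_of_nonpos_of_nonneg hκAB (by linarith)
  have hanti (hK : K ≤ 0) {D₁ D₂ : ℝ} (h₁ : 0 < D₁) (h₂ : 0 < D₂) (h : D₁ ≤ D₂) :
      D₂ ^ 2 * poincareConst (modelDensity K N D₂) Set.univ ≤
        D₁ ^ 2 * poincareConst (modelDensity K N D₁) Set.univ :=
    hle h₁ h₂ (mul_nonpos_of_nonpos_of_nonneg hK (by nlinarith)) (fun h => absurd h hK.not_gt)
      fun h => absurd h hK.not_gt
  have hmono (hK : 0 ≤ K) {D₁ D₂ : ℝ} (h₁ : 0 < D₁) (h₂ : 0 < D₂)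
      (hD : 0 < K → D₂ ≤ Real.pi / √(K / (N - 1))) (h : D₁ ≤ D₂) :
      D₁ ^ 2 * poincareConst (modelDensity K N D₁) Set.univ ≤
        D₂ ^ 2 * poincareConst (modelDensity K N D₂) Set.univ := by
    rcases h.eq_or_lt with rfl | h
    · exact le_rfl
    · exact hle h₂ h₁ (mul_nonpos_of_nonneg_of_nonpos hK (by nlinarith)) hD
        fun hK => h.trans_le (hD hK)
  refine ⟨fun hK D₁ h₁ D₂ h₂ h => hanti hK h₁.1 h₂.1 h,
    fun hK D₁ h₁ D₂ h₂ h => hmono hK h₁.1 h₂.1 h₂.2 h, fun hK => ?_⟩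
  have hconst {D₁ D₂ : ℝ} (h₁ : 0 < D₁) (h₂ : 0 < D₂) (h : D₁ ≤ D₂) :
      D₁ ^ 2 * poincareConst (modelDensity K N D₁) Set.univ =
        D₂ ^ 2 * poincareConst (modelDensity K N D₂) Set.univ :=
    le_antisymm (hmono hK.ge h₁ h₂ (fun h => absurd h hK.le.not_gt) h) (hanti hK.le h₁ h₂ h)
  intro D₁ h₁ D₂ h₂
  rcases le_total D₁ D₂ with h | h
  · exact hconst h₁ h₂ h
  · exact (hconst h₂ h₁ h).symm
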